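/- Let n ≥ 2 and let φ be a Young function. If Ψ : L^φ(ℝⁿ, |x|dx) → ℝⁿ is a continuous and SL(n) covariant valuation (with Ψ(h₁) = Ψ(h₂) whenever h₁ = h₂ almost everywhere), then there exists a continuous function ξ : ℝ → ℝ with ξ(0) = 0 such that Ψ(α χ_M) = ξ(α) m(M) for every α ∈ ℝ, every R > 0, and every measurable set M ⊆ {x ∈ ℝⁿ : |x| < R}, where m(M) = ∫_M x dx. -/

import Mathlib

open MeasureTheory Filter Set Topology TopologicalSpace
open scoped ENNReal

noncomputable section

/-- `ℝⁿ` with the Euclidean norm. -/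
abbrev En (n : ℕ) := EuclideanSpace ℝ (Fin n)

/-- `φ : ℝ → ℝ` is a Young function (viewed as a function on `[0,∞)`):
`φ t = ∫₀ᵗ ψ(s) ds` for a non-decreasing, right-continuous `ψ` with `ψ 0 = 0`,
`ψ s > 0` for `s > 0` and `ψ s → ∞` as `s → ∞`. -/
def IsYoung (φ : ℝ → ℝ) : Prop :=
  ∃ ψ : ℝ → ℝ, (∀ s : ℝ, 0 ≤ s → 0 ≤ ψ s) ∧ MonotoneOn ψ (Set.Ici 0) ∧
    (∀ s : ℝ, 0 ≤ s → ContinuousWithinAt ψ (Set.Ici s) s) ∧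
    ψ 0 = 0 ∧ (∀ s : ℝ, 0 < s → 0 < ψ s) ∧
    Tendsto ψ atTop atTop ∧
    (∀ t : ℝ, 0 ≤ t → φ t = ∫ s in (0:ℝ)..t, ψ s)

/-- The complementary Young function `φ*(t) = sup_{s ≥ 0} (s t − φ s)`. -/
def conjYoung (φ : ℝ → ℝ) (t : ℝ) : ℝ :=
  sSup {y : ℝ | ∃ s : ℝ, 0 ≤ s ∧ y = s * t - φ s}

/-- The measure `μₙ(M) = ∫_M |x| dx`. -/
def mun {n : ℕ} (M : Set (En n)) : ℝ≥0∞ :=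
  ∫⁻ x in M, ENNReal.ofReal ‖x‖

/-- Membership in the Orlicz space `L^φ(ℝⁿ, |x|dx)`:
`h` is measurable and `∫ φ(δ|h(x)|)|x| dx < ∞` for every `δ > 0`. -/
def MemOrlicz {n : ℕ} (φ : ℝ → ℝ) (h : En n → ℝ) : Prop :=
  Measurable h ∧ ∀ δ : ℝ, 0 < δ →
    ∫⁻ x : En n, ENNReal.ofReal (φ (δ * |h x|)) * ENNReal.ofReal ‖x‖ < ⊤

/-- The Orlicz norm
`‖h‖_φ = sup { ∫ |h g| |x| dx : g measurable, ∫ φ*(|g|)|x| dx ≤ 1 }` (valued in `[0,∞]`). -/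
def orliczNorm {n : ℕ} (φ : ℝ → ℝ) (h : En n → ℝ) : ℝ≥0∞ :=
  ⨆ g ∈ {g : En n → ℝ | Measurable g ∧
      ∫⁻ x : En n, ENNReal.ofReal (conjYoung φ |g x|) * ENNReal.ofReal ‖x‖ ≤ 1},
    ∫⁻ x : En n, ENNReal.ofReal |h x * g x| * ENNReal.ofReal ‖x‖

/-- The moment vector `m(Q) = ∫_Q x dx` of a set `Q ⊆ ℝⁿ`. -/
def momentSet {n : ℕ} (Q : Set (En n)) : En n := ∫ x in Q, x

/-- The action of an `n × n` matrix on `ℝⁿ`. -/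
def matVec {n : ℕ} (ϑ : Matrix (Fin n) (Fin n) ℝ) (x : En n) : En n :=
  Matrix.toEuclideanLin ϑ x

/-- A compact convex polytope: the convex hull of a nonempty finite set. -/
def IsPolytope {n : ℕ} (Q : Set (En n)) : Prop :=
  ∃ S : Finset (En n), S.Nonempty ∧ Q = convexHull ℝ (S : Set (En n))

/-- The space of polytopes, topologized via the Hausdorff metric on nonempty
compact subsets of `ℝⁿ`. -/
abbrev PolySp (n : ℕ) := {K : NonemptyCompacts (En n) // IsPolytope (K : Set (En n))}

/-- `Y` is a valuation on polytopes. -/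
def IsPolyValuation {n : ℕ} (Y : Set (En n) → En n) : Prop :=
  ∀ Q₁ Q₂ : Set (En n), IsPolytope Q₁ → IsPolytope Q₂ → IsPolytope (Q₁ ∪ Q₂) →
    IsPolytope (Q₁ ∩ Q₂) → Y Q₁ + Y Q₂ = Y (Q₁ ∪ Q₂) + Y (Q₁ ∩ Q₂)

/-- `Y` is `SL(n)` covariant on polytopes: `Y(ϑ Q) = ϑ (Y Q)` for `det ϑ = 1`. -/
def IsPolySLCovariant {n : ℕ} (Y : Set (En n) → En n) : Prop :=
  ∀ Q : Set (En n), IsPolytope Q → ∀ ϑ : Matrix (Fin n) (Fin n) ℝ, ϑ.det = 1 →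
    Y (matVec ϑ '' Q) = matVec ϑ (Y Q)

/-- `Ψ` is a valuation on `L^φ(ℝⁿ, |x|dx)`. -/
def IsOrliczValuation {n : ℕ} (φ : ℝ → ℝ) (Ψ : (En n → ℝ) → En n) : Prop :=
  ∀ h₁ h₂ : En n → ℝ, MemOrlicz φ h₁ → MemOrlicz φ h₂ →
    Ψ (fun x => max (h₁ x) (h₂ x)) + Ψ (fun x => min (h₁ x) (h₂ x)) = Ψ h₁ + Ψ h₂

/-- `Ψ` is `SL(n)` covariant: `Ψ(h ∘ ϑ⁻¹) = ϑ (Ψ h)` for `det ϑ = 1`. -/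
def IsOrliczSLCovariant {n : ℕ} (φ : ℝ → ℝ) (Ψ : (En n → ℝ) → En n) : Prop :=
  ∀ h : En n → ℝ, MemOrlicz φ h → ∀ ϑ : Matrix (Fin n) (Fin n) ℝ, ϑ.det = 1 →
    Ψ (fun x => h (matVec ϑ⁻¹ x)) = matVec ϑ (Ψ h)

/-- `Ψ` is continuous: `Ψ(h_k) → Ψ(h)` whenever `‖h_k − h‖_φ → 0`. -/
def OrliczContinuous {n : ℕ} (φ : ℝ → ℝ) (Ψ : (En n → ℝ) → En n) : Prop :=
  ∀ (hk : ℕ → En n → ℝ) (h : En n → ℝ), (∀ k, MemOrlicz φ (hk k)) → MemOrlicz φ h →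
    Tendsto (fun k => orliczNorm φ (fun x => hk k x - h x)) atTop (𝓝 0) →
    Tendsto (fun k => Ψ (hk k)) atTop (𝓝 (Ψ h))

/-- `Ψ` identifies functions that agree almost everywhere. -/
def RespectsAE {n : ℕ} (φ : ℝ → ℝ) (Ψ : (En n → ℝ) → En n) : Prop :=
  ∀ h₁ h₂ : En n → ℝ, MemOrlicz φ h₁ → MemOrlicz φ h₂ →
    (∀ᵐ x : En n, h₁ x = h₂ x) → Ψ h₁ = Ψ h₂

/-- The `Δ₂` condition: `φ(2t) ≤ C φ(t)` for all `t ≥ T`. -/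
def SatisfiesDelta2 (φ : ℝ → ℝ) : Prop :=
  ∃ T C : ℝ, 0 ≤ T ∧ 0 < C ∧ ∀ t : ℝ, T ≤ t → φ (2 * t) ≤ C * φ t

/-- A closed cube in `ℝⁿ`: `{x : cᵢ ≤ xᵢ ≤ dᵢ}` with all side lengths equal. -/
def IsClosedCube {n : ℕ} (C : Set (En n)) : Prop :=
  ∃ c d : Fin n → ℝ, (∃ L : ℝ, 0 ≤ L ∧ ∀ i, d i - c i = L) ∧
    C = {x : En n | ∀ i, c i ≤ x i ∧ x i ≤ d i}

/-! ### Orlicz estimates -/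

/-- bounded measurable sets -/
def BM {n : ℕ} (M : Set (En n)) : Prop := MeasurableSet M ∧ ∃ R : ℝ, ∀ x ∈ M, ‖x‖ < R

theorem BM.mono {n : ℕ} {M N : Set (En n)} (h : BM M) (hN : MeasurableSet N) (hs : N ⊆ M) : BM N :=
  ⟨hN, h.2.imp fun _ hR x hx => hR x (hs hx)⟩

/-- The weighted measure. -/
def muW (n : ℕ) : Measure (En n) := volume.withDensity (fun x => ENNReal.ofReal ‖x‖)

theorem young_ineq {φ : ℝ → ℝ} (hφ : IsYoung φ) {s t : ℝ} (hs : 0 ≤ s) (ht : 0 ≤ t) :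
    s * t ≤ φ s + conjYoung φ t := by
  obtain ⟨ψ, h0, hmono, -, -, -, htop, hint⟩ := hφ
  have hI : ∀ a b : ℝ, 0 ≤ a → 0 ≤ b → IntervalIntegrable ψ volume a b := by
    intro a b ha hb
    apply MonotoneOn.intervalIntegrable
    apply hmono.mono
    intro x hx
    exact le_trans (le_min ha hb) hx.1
  obtain ⟨T, hT0, hT⟩ : ∃ T : ℝ, 0 ≤ T ∧ ∀ x, T ≤ x → t ≤ ψ x := by
    obtain ⟨T, hT⟩ := (htop.eventually_ge_atTop t).exists_forall_of_atTop
    exact ⟨max T 0, le_max_right _ _, fun x hx => hT x (le_trans (le_max_left _ _) hx)⟩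
  have hphi0 : ∀ a, 0 ≤ a → 0 ≤ φ a := by
    intro a ha
    rw [hint a ha]
    exact intervalIntegral.integral_nonneg ha fun x hx => h0 x hx.1
  have hbdd : BddAbove {y : ℝ | ∃ s : ℝ, 0 ≤ s ∧ y = s * t - φ s} := by
    refine ⟨T * t, ?_⟩
    rintro y ⟨s, hs, rfl⟩
    rcases le_total s T with h | h
    · have := hphi0 s hs
      nlinarith
    · have h1 : φ s = φ T + ∫ x in T..s, ψ x := by
        rw [hint s hs, hint T hT0, intervalIntegral.integral_add_adjacent_intervals
          (hI _ _ le_rfl hT0) (hI _ _ hT0 hs)]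
      have h2 : ∫ x in T..s, t ≤ ∫ x in T..s, ψ x :=
        intervalIntegral.integral_mono_on h (by simp) (hI _ _ hT0 hs) fun x hx => hT x hx.1
      rw [intervalIntegral.integral_const, smul_eq_mul] at h2
      have := hphi0 T hT0
      linarith
  have := le_csSup hbdd ⟨s, hs, rfl⟩
  unfold conjYoung
  linarith

theorem young_zero {φ : ℝ → ℝ} (hφ : IsYoung φ) : φ 0 = 0 := by
  obtain ⟨ψ, -, -, -, -, -, -, hint⟩ := hφ
  rw [hint 0 le_rfl]; simp

theorem muW_lt_top {n : ℕ} {M : Set (En n)} (hM : BM M) : muW n M < ⊤ := by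
  obtain ⟨hm, R, hR⟩ := hM
  rw [muW, withDensity_apply _ hm]
  have hsub : M ⊆ Metric.ball 0 R := fun x hx => by simpa using hR x hx
  calc ∫⁻ x in M, ENNReal.ofReal ‖x‖ ≤ ∫⁻ x in M, ENNReal.ofReal R :=
        setLIntegral_mono' hm fun x hx => ENNReal.ofReal_le_ofReal (hR x hx).le
    _ = ENNReal.ofReal R * volume M := by simp
    _ < ⊤ := ENNReal.mul_lt_top ENNReal.ofReal_lt_top
        ((measure_mono hsub).trans_lt measure_ball_lt_top)

theorem lint_indicator {n : ℕ} {M : Set (En n)} (hM : MeasurableSet M) (c : ℝ≥0∞) :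
    ∫⁻ x : En n, (M.indicator (fun _ => c) x) * ENNReal.ofReal ‖x‖ = c * muW n M := by
  rw [muW, withDensity_apply _ hM, ← lintegral_const_mul _ (by fun_prop), ← lintegral_indicator hM]
  congr 1
  ext x
  by_cases hx : x ∈ M <;> simp [hx]

theorem mem_indicator {n : ℕ} {φ : ℝ → ℝ} (hφ : IsYoung φ) {M : Set (En n)} (hM : BM M) (α : ℝ) :
    MemOrlicz φ (M.indicator fun _ => α) := by
  refine ⟨measurable_const.indicator hM.1, fun δ _ => ?_⟩
  have : ∀ x : En n, ENNReal.ofReal (φ (δ * |M.indicator (fun _ => α) x|)) =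
      M.indicator (fun _ => ENNReal.ofReal (φ (δ * |α|))) x := by
    intro x
    by_cases hx : x ∈ M <;> simp [hx, young_zero hφ]
  simp_rw [this]
  rw [lint_indicator hM.1]
  exact ENNReal.mul_lt_top ENNReal.ofReal_lt_top (muW_lt_top hM)

theorem norm_indicator_le {n : ℕ} {φ : ℝ → ℝ} (hφ : IsYoung φ) {M : Set (En n)}
    (hM : MeasurableSet M) (α : ℝ) {t : ℝ} (ht : 0 < t) :
    orliczNorm φ (M.indicator fun _ => α) ≤
      ENNReal.ofReal (|α| / t) * (ENNReal.ofReal (φ t) * muW n M + 1) := by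
  unfold orliczNorm
  refine iSup₂_le fun g hg => ?_
  obtain ⟨hgm, hg1⟩ := hg
  have hpt : ∀ x : En n, ENNReal.ofReal |M.indicator (fun _ => α) x * g x| * ENNReal.ofReal ‖x‖ ≤
      ENNReal.ofReal (|α| / t) * (M.indicator (fun _ => ENNReal.ofReal (φ t)) x * ENNReal.ofReal ‖x‖
        + ENNReal.ofReal (conjYoung φ |g x|) * ENNReal.ofReal ‖x‖) := by
    intro x
    rw [← add_mul, ← mul_assoc]
    gcongr
    by_cases hx : x ∈ M
    · simp only [hx, indicator_of_mem]
      calc ENNReal.ofReal |α * g x| = ENNReal.ofReal (|α| / t * (t * |g x|)) := by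
            congr 1; rw [abs_mul]; field_simp
        _ ≤ ENNReal.ofReal (|α| / t * (φ t + conjYoung φ |g x|)) := by
            apply ENNReal.ofReal_le_ofReal
            have := young_ineq hφ ht.le (abs_nonneg (g x))
            gcongr
        _ = ENNReal.ofReal (|α| / t) * ENNReal.ofReal (φ t + conjYoung φ |g x|) :=
            ENNReal.ofReal_mul (by positivity)
        _ ≤ _ := by gcongr; exact ENNReal.ofReal_add_le
    · simp [hx]
  calc _ ≤ _ := lintegral_mono hpt
    _ = ENNReal.ofReal (|α| / t) * ((∫⁻ x : En n, M.indicator (fun _ => ENNReal.ofReal (φ t)) x *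
          ENNReal.ofReal ‖x‖) + ∫⁻ x : En n, ENNReal.ofReal (conjYoung φ |g x|) *
          ENNReal.ofReal ‖x‖) := by
        rw [lintegral_const_mul' _ _ ENNReal.ofReal_ne_top, lintegral_add_left]
        exact (measurable_const.indicator hM).mul (by fun_prop)
    _ ≤ _ := by
        rw [lint_indicator hM]
        gcongr

theorem norm_tendsto_scale {n : ℕ} {φ : ℝ → ℝ} (hφ : IsYoung φ) {M : Set (En n)}
    (hM : BM M) {a : ℕ → ℝ} (ha : Tendsto a atTop (𝓝 0)) :
    Tendsto (fun k => orliczNorm φ (M.indicator fun _ => a k)) atTop (𝓝 0) := by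
  refine tendsto_of_tendsto_of_tendsto_of_le_of_le tendsto_const_nhds (?_ : Tendsto
    (fun k => ENNReal.ofReal (|a k| / 1) * (ENNReal.ofReal (φ 1) * muW n M + 1)) atTop (𝓝 0))
    (fun _ => zero_le) fun k => norm_indicator_le hφ hM.1 _ one_pos
  have hK : ENNReal.ofReal (φ 1) * muW n M + 1 ≠ ⊤ := by
    have := muW_lt_top hM
    finiteness
  have h1 : Tendsto (fun k => ENNReal.ofReal (|a k| / 1)) atTop (𝓝 0) := by
    rw [← ENNReal.ofReal_zero]
    apply ENNReal.tendsto_ofReal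
    simpa using ha.abs
  simpa using ENNReal.Tendsto.mul_const h1 (Or.inr hK)

theorem norm_tendsto_sets {n : ℕ} {φ : ℝ → ℝ} (hφ : IsYoung φ) (α : ℝ) {M : ℕ → Set (En n)}
    (hM : ∀ k, MeasurableSet (M k)) (ha : Tendsto (fun k => muW n (M k)) atTop (𝓝 0)) :
    Tendsto (fun k => orliczNorm φ ((M k).indicator fun _ => α)) atTop (𝓝 0) := by
  rw [ENNReal.tendsto_nhds_zero]
  intro ε hε
  -- choose t with (|α|/t) * 2 ≤ ε
  have hlim : Tendsto (fun t : ℝ => ENNReal.ofReal (|α| / t) * 2) atTop (𝓝 0) := by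
    have h1 : Tendsto (fun t : ℝ => ENNReal.ofReal (|α| / t)) atTop (𝓝 0) := by
      rw [← ENNReal.ofReal_zero]
      exact ENNReal.tendsto_ofReal (tendsto_const_nhds.div_atTop tendsto_id)
    simpa using ENNReal.Tendsto.mul_const h1 (Or.inr (by simp : (2 : ℝ≥0∞) ≠ ⊤))
  obtain ⟨t, ht1, ht0⟩ := ((ENNReal.tendsto_nhds_zero.1 hlim ε hε).and (eventually_gt_atTop 0)).exists
  have h2 : Tendsto (fun k => ENNReal.ofReal (φ t) * muW n (M k)) atTop (𝓝 0) := by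
    simpa using ENNReal.Tendsto.const_mul ha (Or.inr (by simp : ENNReal.ofReal (φ t) ≠ ⊤))
  filter_upwards [ENNReal.tendsto_nhds_zero.1 h2 1 one_pos] with k hk
  refine (norm_indicator_le hφ (hM k) α ht0).trans (le_trans ?_ ht1)
  gcongr
  calc _ ≤ (1 : ℝ≥0∞) + 1 := by gcongr
    _ = 2 := one_add_one_eq_two

/-! ### The set function -/

theorem matVec_apply {n : ℕ} (A : Matrix (Fin n) (Fin n) ℝ) (x : En n) (i : Fin n) :
    matVec A x i = ∑ j, A i j * x j := by
  simp [matVec, Matrix.toLpLin_apply, Matrix.mulVec, dotProduct]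

theorem matVec_transvection {n : ℕ} (i j : Fin n) (x : En n) :
    matVec (Matrix.transvection i j 1) x i = x i + x j := by
  simp [matVec, Matrix.toLpLin_apply, Matrix.transvection, Matrix.add_mulVec,
    Matrix.single_mulVec]

theorem exists_ne_fin {n : ℕ} (hn : 2 ≤ n) (j : Fin n) : ∃ i : Fin n, i ≠ j := by
  haveI : Nontrivial (Fin n) := Fin.nontrivial_iff_two_le.2 hn
  exact exists_ne j

theorem Psi_zero {n : ℕ} (hn : 2 ≤ n) {φ : ℝ → ℝ} (hφ : IsYoung φ)
    {Ψ : (En n → ℝ) → En n} (hcov : IsOrliczSLCovariant φ Ψ) : Ψ (fun _ => 0) = 0 := by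
  have hm : MemOrlicz φ (fun _ : En n => (0 : ℝ)) := by
    have := mem_indicator (n := n) hφ (M := ∅) ⟨MeasurableSet.empty, 0, by simp⟩ 0
    simpa using this
  ext j
  obtain ⟨i, hij⟩ := exists_ne_fin hn j
  have h := hcov _ hm (Matrix.transvection i j 1) (Matrix.det_transvection_of_ne i j hij 1)
  have h2 := congrArg (fun v : En n => v i) h
  simp only [matVec_transvection] at h2
  simpa using h2

theorem nu_add {n : ℕ} (hn : 2 ≤ n) {φ : ℝ → ℝ} (hφ : IsYoung φ)
    {Ψ : (En n → ℝ) → En n} (hcov : IsOrliczSLCovariant φ Ψ) (hval : IsOrliczValuation φ Ψ)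
    (α : ℝ) {A B : Set (En n)} (hA : BM A) (hB : BM B) (hd : Disjoint A B) :
    Ψ ((A ∪ B).indicator fun _ => α) = Ψ (A.indicator fun _ => α) + Ψ (B.indicator fun _ => α) := by
  have h := hval _ _ (mem_indicator hφ hA α) (mem_indicator hφ hB α)
  have hAB : ∀ x, x ∈ A → x ∉ B := fun x hx hx' => Set.disjoint_left.1 hd hx hx'
  rcases le_total 0 α with h0 | h0
  · have h1 : (fun x => max (A.indicator (fun _ => α) x) (B.indicator (fun _ => α) x)) =
        (A ∪ B).indicator fun _ => α := by
      ext x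
      by_cases hx : x ∈ A <;> by_cases hx' : x ∈ B <;> simp [hx, hx', h0]
    have h2 : (fun x => min (A.indicator (fun _ => α) x) (B.indicator (fun _ => α) x)) =
        fun _ => 0 := by
      ext x
      by_cases hx : x ∈ A
      · simp [hx, hAB x hx, h0]
      · by_cases hx' : x ∈ B <;> simp [hx, hx', h0]
    rw [h1, h2, Psi_zero hn hφ hcov, add_zero] at h
    exact h
  · have h1 : (fun x => min (A.indicator (fun _ => α) x) (B.indicator (fun _ => α) x)) =
        (A ∪ B).indicator fun _ => α := by
      ext x
      by_cases hx : x ∈ A <;> by_cases hx' : x ∈ B <;> simp [hx, hx', h0]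
    have h2 : (fun x => max (A.indicator (fun _ => α) x) (B.indicator (fun _ => α) x)) =
        fun _ => 0 := by
      ext x
      by_cases hx : x ∈ A
      · simp [hx, hAB x hx, h0]
      · by_cases hx' : x ∈ B <;> simp [hx, hx', h0]
    rw [h1, h2, Psi_zero hn hφ hcov, zero_add] at h
    exact h

theorem nu_hasSum {n : ℕ} (hn : 2 ≤ n) {φ : ℝ → ℝ} (hφ : IsYoung φ)
    {Ψ : (En n → ℝ) → En n} (hcov : IsOrliczSLCovariant φ Ψ) (hval : IsOrliczValuation φ Ψ)
    (hcont : OrliczContinuous φ Ψ) (α : ℝ) (f : ℕ → Set (En n)) (hf : ∀ i, MeasurableSet (f i))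
    (hd : Pairwise (Function.onFun Disjoint f)) (hU : BM (⋃ i, f i)) :
    HasSum (fun i => Ψ ((f i).indicator fun _ => α)) (Ψ ((⋃ i, f i).indicator fun _ => α)) := by
  have hbm : ∀ i, BM (f i) := fun i => hU.mono (hf i) (subset_iUnion f i)
  have hsm : ∀ s : Finset ℕ, MeasurableSet (⋃ i ∈ s, f i) := fun s =>
    Finset.measurableSet_biUnion s fun i _ => hf i
  have hss : ∀ s : Finset ℕ, (⋃ i ∈ s, f i) ⊆ ⋃ i, f i := fun s =>
    iUnion₂_subset fun i _ => subset_iUnion f i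
  have hsb : ∀ s : Finset ℕ, BM (⋃ i ∈ s, f i) := fun s => hU.mono (hsm s) (hss s)
  have hfin : ∀ s : Finset ℕ, ∑ i ∈ s, Ψ ((f i).indicator fun _ => α) =
      Ψ ((⋃ i ∈ s, f i).indicator fun _ => α) := by
    intro s
    induction s using Finset.induction_on with
    | empty => simp [Psi_zero hn hφ hcov]
    | insert a s ha ih =>
      rw [Finset.sum_insert ha, ih, Finset.set_biUnion_insert, nu_add hn hφ hcov hval α (hbm a) (hsb s)]
      rw [Set.disjoint_iUnion₂_right]
      intro i hi
      exact hd (by rintro rfl; exact ha hi)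
  have hmeas : Tendsto (fun s : Finset ℕ => muW n ((⋃ i, f i) \ ⋃ i ∈ s, f i)) atTop (𝓝 0) := by
    have h1 : ∀ s : Finset ℕ, muW n ((⋃ i, f i) \ ⋃ i ∈ s, f i) =
        muW n (⋃ i, f i) - ∑ i ∈ s, muW n (f i) := by
      intro s
      rw [measure_sdiff (hss s) (hsm s).nullMeasurableSet (muW_lt_top (hsb s)).ne,
        measure_biUnion_finset (fun i _ j _ hij => hd hij) (fun i _ => hf i)]
    simp_rw [h1]
    have h2 : HasSum (fun i => muW n (f i)) (muW n (⋃ i, f i)) := by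
      rw [measure_iUnion hd hf]
      exact ENNReal.summable.hasSum
    have := ENNReal.Tendsto.sub (tendsto_const_nhds (x := muW n (⋃ i, f i))) h2
      (Or.inl (muW_lt_top hU).ne)
    simpa using this
  unfold HasSum
  simp only [SummationFilter.unconditional_filter]
  simp_rw [hfin]
  apply tendsto_of_seq_tendsto
  intro s hs
  apply hcont _ _ (fun k => mem_indicator hφ (hsb _) α) (mem_indicator hφ hU α)
  have : ∀ k, (fun x => (⋃ i ∈ s k, f i).indicator (fun _ => α) x -
      (⋃ i, f i).indicator (fun _ => α) x) =
      ((⋃ i, f i) \ ⋃ i ∈ s k, f i).indicator fun _ => -α := by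
    intro k
    ext x
    by_cases h1 : x ∈ ⋃ i ∈ s k, f i
    · have h2 := hss _ h1
      rw [indicator_of_mem h1, indicator_of_mem h2, indicator_of_notMem (fun h => h.2 h1), sub_self]
    · by_cases h2 : x ∈ ⋃ i, f i
      · rw [indicator_of_notMem h1, indicator_of_mem h2, indicator_of_mem ((Set.mem_sdiff x).2 ⟨h2, h1⟩), zero_sub]
      · rw [indicator_of_notMem h1, indicator_of_notMem h2, indicator_of_notMem (fun h => h2 h.1),
          sub_self]
  simp_rw [this]
  exact norm_tendsto_sets hφ (-α) (fun k => hU.1.diff (hsm _)) (hmeas.comp hs)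

theorem nu_null {n : ℕ} (hn : 2 ≤ n) {φ : ℝ → ℝ} (hφ : IsYoung φ)
    {Ψ : (En n → ℝ) → En n} (hcov : IsOrliczSLCovariant φ Ψ) (hae : RespectsAE φ Ψ)
    (α : ℝ) (M : Set (En n)) (hM : BM M) (h0 : volume M = 0) :
    Ψ (M.indicator fun _ => α) = 0 := by
  rw [← Psi_zero hn hφ hcov]
  have hm : MemOrlicz φ (fun _ : En n => (0 : ℝ)) := by
    have := mem_indicator (n := n) hφ (M := ∅) ⟨MeasurableSet.empty, 0, by simp⟩ 0
    simpa using this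
  apply hae _ _ (mem_indicator hφ hM α) hm
  filter_upwards [measure_eq_zero_iff_ae_notMem.1 h0] with x hx
  simp [hx]

/-! ### Densities -/

theorem exists_density {n : ℕ} (ν : Set (En n) → En n)
    (hsum : ∀ f : ℕ → Set (En n), (∀ i, MeasurableSet (f i)) →
      Pairwise (Function.onFun Disjoint f) → BM (⋃ i, f i) →
      HasSum (fun i => ν (f i)) (ν (⋃ i, f i)))
    (hnull : ∀ M, BM M → volume M = 0 → ν M = 0) :
    ∃ f : Fin n → En n → ℝ, (∀ i, Measurable (f i)) ∧
      ∀ M, BM M → ∀ i, IntegrableOn (f i) M ∧ ν M i = ∫ x in M, f i x := by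
  have hball : ∀ k : ℕ, MeasurableSet {x : En n | ‖x‖ < k} := fun k =>
    measurableSet_lt measurable_norm measurable_const
  have key : ∀ (k : ℕ) (i : Fin n), ∃ g : En n → ℝ, Measurable g ∧ Integrable g ∧
      ∀ M, MeasurableSet M → M ⊆ {x : En n | ‖x‖ < k} → ν M i = ∫ x in M, g x := by
    intro k i
    classical
    have hbm : ∀ A, MeasurableSet A → BM (A ∩ {x : En n | ‖x‖ < k}) := fun A hA =>
      ⟨hA.inter (hball k), k, fun x hx => hx.2⟩
    let s : SignedMeasure (En n) :=
      { measureOf' := fun A => if MeasurableSet A then ν (A ∩ {x : En n | ‖x‖ < k}) i else 0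
        empty' := by
          simp [hnull ∅ ⟨MeasurableSet.empty, 0, by simp⟩ (by simp)]
        not_measurable' := fun A hA => by simp [hA]
        m_iUnion' := by
          intro f hf hd
          have h := hsum (fun j => f j ∩ {x : En n | ‖x‖ < k}) (fun j => (hf j).inter (hball k))
            (fun a b hab => (hd hab).mono inter_subset_left inter_subset_left)
            (by rw [← iUnion_inter]; exact hbm _ (MeasurableSet.iUnion hf))
          rw [← iUnion_inter] at h
          have h2 := h.mapL (EuclideanSpace.proj i : En n →L[ℝ] ℝ)
          simpa [hf, MeasurableSet.iUnion hf] using h2 }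
    have hs : ∀ A, MeasurableSet A → s A = ν (A ∩ {x : En n | ‖x‖ < k}) i := fun A hA => if_pos hA
    have hac : s ≪ᵥ (volume : Measure (En n)).toENNRealVectorMeasure := by
      apply VectorMeasure.AbsolutelyContinuous.mk
      intro A hA h0
      rw [Measure.toENNRealVectorMeasure_apply_measurable hA] at h0
      rw [hs A hA, hnull _ (hbm A hA) (measure_mono_null inter_subset_left h0)]
      simp
    refine ⟨s.rnDeriv volume, SignedMeasure.measurable_rnDeriv _ _,
      SignedMeasure.integrable_rnDeriv _ _, fun M hM hMs => ?_⟩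
    rw [← withDensityᵥ_apply (SignedMeasure.integrable_rnDeriv _ _) hM,
      SignedMeasure.withDensityᵥ_rnDeriv_eq s _ hac, hs M hM, inter_eq_left.2 hMs]
  choose g hgm hgi hgν using key
  have hcomp : ∀ (k m : ℕ) (i : Fin n), ∀ᵐ x : En n, ‖x‖ < k → ‖x‖ < m → g k i x = g m i x := by
    intro k m i
    have hS : MeasurableSet ({x : En n | ‖x‖ < k} ∩ {x : En n | ‖x‖ < m}) :=
      (hball k).inter (hball m)
    have h := Integrable.ae_eq_of_forall_setIntegral_eq (μ := volume.restrict
      ({x : En n | ‖x‖ < k} ∩ {x : En n | ‖x‖ < m})) (g k i) (g m i)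
      (hgi k i).integrableOn (hgi m i).integrableOn (by
        intro A hA _
        rw [Measure.restrict_restrict hA,
          ← hgν k i _ (hA.inter hS) (fun x hx => hx.2.1),
          ← hgν m i _ (hA.inter hS) (fun x hx => hx.2.2)])
    rw [Filter.EventuallyEq, ae_restrict_iff' hS] at h
    filter_upwards [h] with x hx h1 h2 using hx ⟨h1, h2⟩
  refine ⟨fun i x => g (⌊‖x‖⌋₊ + 1) i x, fun i => ?_, ?_⟩
  · have h1 : Measurable (fun p : En n × ℕ => g p.2 i p.1) :=
      measurable_from_prod_countable_left fun k => hgm k i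
    exact h1.comp (measurable_id.prodMk ((Nat.measurable_floor.comp measurable_norm).add_const 1))
  · rintro M ⟨hM, R, hR⟩ i
    obtain ⟨k, hk⟩ := exists_nat_gt R
    have hMk : M ⊆ {x : En n | ‖x‖ < k} := fun x hx => (hR x hx).trans hk
    have hae : ∀ᵐ x ∂(volume.restrict M), g k i x = g (⌊‖x‖⌋₊ + 1) i x := by
      rw [ae_restrict_iff' hM]
      filter_upwards [ae_all_iff.2 fun m => hcomp k m i] with x hx hxM
      apply hx _ (hMk hxM)
      exact_mod_cast Nat.lt_floor_add_one ‖x‖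
    refine ⟨(hgi k i).integrableOn.congr hae, ?_⟩
    rw [hgν k i M hM hMk]
    exact integral_congr_ae hae

/-! ### Rigidity of covariant densities -/

theorem matVec_mul {n : ℕ} (A B : Matrix (Fin n) (Fin n) ℝ) (x : En n) :
    matVec A (matVec B x) = matVec (A * B) x := by
  simp [matVec, Matrix.toLpLin_apply, Matrix.mulVec_mulVec]

theorem matVec_one {n : ℕ} (x : En n) : matVec 1 x = x := by
  simp [matVec]

theorem continuous_matVec {n : ℕ} (A : Matrix (Fin n) (Fin n) ℝ) :
    Continuous (matVec A : En n → En n) :=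
  LinearMap.continuous_of_finiteDimensional (Matrix.toEuclideanLin A)

theorem measurePreserving_matVec {n : ℕ} {A : Matrix (Fin n) (Fin n) ℝ} (hA : A.det = 1) :
    MeasurePreserving (matVec A : En n → En n) volume volume := by
  refine ⟨(continuous_matVec A).measurable, ?_⟩
  have hdet : LinearMap.det (Matrix.toEuclideanLin A : En n →ₗ[ℝ] En n) = 1 := by
    rw [← hA]; exact LinearMap.det_toLpLin 2 A
  have := Measure.map_linearMap_addHaar_eq_smul_addHaar (volume : Measure (En n))
    (f := Matrix.toEuclideanLin A) (by rw [hdet]; exact one_ne_zero)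
  rw [hdet, inv_one, abs_one, ENNReal.ofReal_one, one_smul] at this
  exact this

theorem inv_mul_det_one {n : ℕ} {A : Matrix (Fin n) (Fin n) ℝ} (hA : A.det = 1) :
    A⁻¹ * A = 1 ∧ A * A⁻¹ = 1 :=
  ⟨Matrix.nonsing_inv_mul A (by rw [hA]; exact isUnit_one),
    Matrix.mul_nonsing_inv A (by rw [hA]; exact isUnit_one)⟩

theorem measurableEmbedding_matVec {n : ℕ} {A : Matrix (Fin n) (Fin n) ℝ} (hA : A.det = 1) :
    MeasurableEmbedding (matVec A : En n → En n) := by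
  apply (continuous_matVec A).measurableEmbedding
  intro x y hxy
  have := congrArg (matVec A⁻¹) hxy
  simpa [matVec_mul, (inv_mul_det_one hA).1, matVec_one] using this

theorem BM.preimage {n : ℕ} {M : Set (En n)} (hM : BM M) {A : Matrix (Fin n) (Fin n) ℝ}
    (hA : A.det = 1) : BM (matVec A⁻¹ ⁻¹' M) := by
  refine ⟨(continuous_matVec _).measurable hM.1, ?_⟩
  obtain ⟨R, hR⟩ := hM.2
  obtain ⟨C, hC⟩ := ((isCompact_closedBall (0 : En n) R).image (continuous_matVec A)).isBounded.exists_norm_le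
  refine ⟨C + 1, fun x hx => ?_⟩
  have := hC x ⟨matVec A⁻¹ x, by simpa using (hR _ hx).le, by
    rw [matVec_mul, (inv_mul_det_one hA).2, matVec_one]⟩
  linarith

theorem density_cov {n : ℕ} (ν : Set (En n) → En n)
    (hcov : ∀ N, BM N → ∀ A : Matrix (Fin n) (Fin n) ℝ, A.det = 1 →
      ν (matVec A⁻¹ ⁻¹' N) = matVec A (ν N))
    (f : Fin n → En n → ℝ)
    (hf : ∀ M, BM M → ∀ i, IntegrableOn (f i) M ∧ ν M i = ∫ x in M, f i x)
    (A : Matrix (Fin n) (Fin n) ℝ) (hA : A.det = 1) (i : Fin n) :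
    ∀ᵐ x : En n, f i (matVec A x) = ∑ j, A i j * f j x := by
  have hball : ∀ k : ℕ, MeasurableSet {x : En n | ‖x‖ < k} := fun k =>
    measurableSet_lt measurable_norm measurable_const
  have hpre : ∀ N : Set (En n), matVec A ⁻¹' (matVec A⁻¹ ⁻¹' N) = N := by
    intro N
    ext x
    simp [matVec_mul, (inv_mul_det_one hA).1, matVec_one]
  have hint1 : ∀ N, BM N → IntegrableOn (fun x => f i (matVec A x)) N := by
    intro N hN
    have := (hf _ (hN.preimage hA) i).1
    rw [← (measurePreserving_matVec hA).integrableOn_comp_preimage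
      (measurableEmbedding_matVec hA), hpre] at this
    exact this
  have hint2 : ∀ N, BM N → IntegrableOn (fun x => ∑ j, A i j * f j x) N := by
    intro N hN
    apply integrable_finsetSum
    intro j _
    exact (hf N hN j).1.const_mul _
  have heq : ∀ N, BM N → ∫ x in N, f i (matVec A x) = ∫ x in N, ∑ j, A i j * f j x := by
    intro N hN
    have h1 := (measurePreserving_matVec hA).setIntegral_preimage_emb
      (measurableEmbedding_matVec hA) (f i) (matVec A⁻¹ ⁻¹' N)
    rw [hpre] at h1
    rw [h1, ← (hf _ (hN.preimage hA) i).2, hcov N hN A hA, matVec_apply,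
      integral_finsetSum _ fun j _ => (hf N hN j).1.const_mul _]
    refine Finset.sum_congr rfl fun j _ => ?_
    rw [integral_const_mul, (hf N hN j).2]
  have hk : ∀ k : ℕ, ∀ᵐ x : En n, ‖x‖ < k → f i (matVec A x) = ∑ j, A i j * f j x := by
    intro k
    have hb : BM {x : En n | ‖x‖ < k} := ⟨hball k, k, fun x hx => hx⟩
    have h := Integrable.ae_eq_of_forall_setIntegral_eq (μ := volume.restrict
      {x : En n | ‖x‖ < k}) _ _ (hint1 _ hb) (hint2 _ hb) (by
        intro B hB _
        rw [Measure.restrict_restrict hB]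
        exact heq _ (hb.mono (hB.inter (hball k)) inter_subset_right))
    rwa [Filter.EventuallyEq, ae_restrict_iff' (hball k)] at h
  filter_upwards [ae_all_iff.2 hk] with x hx
  obtain ⟨k, hk⟩ := exists_nat_gt ‖x‖
  exact hx k hk

/-- diagonal entries -/
def dvec {n : ℕ} (i k : Fin n) (s : ℝ) (j : Fin n) : ℝ :=
  if j = i then s else if j = k then s⁻¹ else 1

/-- The simply transitive family. -/
def fam {n : ℕ} (i k : Fin n) (q : En n) : Matrix (Fin n) (Fin n) ℝ :=
  (Matrix.diagonal (dvec i k (q i))).updateCol i (fun j => q j)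

theorem fam_det {n : ℕ} {i k : Fin n} (hik : k ≠ i) {q : En n} (hq : q i ≠ 0) :
    (fam i k q).det = 1 := by
  have h1 : (Matrix.diagonal (dvec i k (q i))).det = 1 := by
    rw [Matrix.det_diagonal, ← Finset.mul_prod_erase _ _ (Finset.mem_univ i),
      ← Finset.mul_prod_erase _ _ (Finset.mem_erase.2 ⟨hik, Finset.mem_univ k⟩),
      Finset.prod_eq_one]
    · simp [dvec, hik, hq]
    · intro j hj
      simp only [Finset.mem_erase] at hj
      simp [dvec, hj.1, hj.2.1]
  have h2 := congrFun (Matrix.mulVec_cramer (Matrix.diagonal (dvec i k (q i))) (fun j => q j)) i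
  rw [h1, one_smul, Matrix.mulVec_diagonal, Matrix.cramer_apply] at h2
  have h3 : dvec i k (q i) i = q i := by simp [dvec]
  rw [h3] at h2
  exact mul_left_cancel₀ hq (by rw [mul_one]; exact h2)

theorem fam_row {n : ℕ} (i k : Fin n) (q : En n) (v : Fin n → ℝ) :
    ∑ j, fam i k q i j * v j = q i * v i := by
  rw [Finset.sum_eq_single i]
  · simp [fam]
  · intro j _ hj
    simp [fam, Matrix.updateCol_apply, hj, Matrix.diagonal_apply_ne _ hj.symm]
  · simp

theorem fam_apply_ne {n : ℕ} (i k : Fin n) (q x : En n) {j : Fin n} (hj : j ≠ i) :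
    matVec (fam i k q) x j = q j * x i + dvec i k (q i) j * x j := by
  rw [matVec_apply, ← Finset.add_sum_erase _ _ (Finset.mem_univ i)]
  congr 1
  · simp [fam]
  · rw [Finset.sum_eq_single_of_mem j (Finset.mem_erase.2 ⟨hj, Finset.mem_univ j⟩)]
    · simp [fam, Matrix.updateCol_apply, hj]
    · intro l hl hlj
      have := (Finset.mem_erase.1 hl).1
      simp [fam, Matrix.updateCol_apply, this, Matrix.diagonal_apply_ne _ hlj.symm]

theorem fam_apply_self {n : ℕ} (i k : Fin n) (q x : En n) :
    matVec (fam i k q) x i = q i * x i := by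
  rw [matVec_apply]
  exact fam_row i k q _

theorem fam_measurable {n : ℕ} (i k : Fin n) :
    Measurable (fun p : En n × En n => matVec (fam i k p.1) p.2) := by
  have h : ∀ j, Measurable (fun p : En n × En n => matVec (fam i k p.1) p.2 j) := by
    intro j
    by_cases hj : j = i
    · subst hj
      simp_rw [fam_apply_self]
      fun_prop
    · simp_rw [fam_apply_ne i k _ _ hj]
      unfold dvec
      simp only [if_neg hj]
      split_ifs <;> fun_prop
  have h2 : Measurable (fun p : En n × En n => WithLp.toLp 2 (fun j => matVec (fam i k p.1) p.2 j)) :=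
    (WithLp.measurable_toLp 2 _).comp (measurable_pi_lambda _ h)
  exact h2

theorem ae_coord_ne {n : ℕ} (i : Fin n) : ∀ᵐ x : En n, x i ≠ 0 := by
  have h := Measure.addHaar_submodule (volume : Measure (En n))
    (LinearMap.ker (EuclideanSpace.proj i : En n →L[ℝ] ℝ).toLinearMap) (by
      intro h
      have : EuclideanSpace.single i (1 : ℝ) ∈
        LinearMap.ker (EuclideanSpace.proj i : En n →L[ℝ] ℝ).toLinearMap := by
          rw [h]; trivial
      simp at this)
  filter_upwards [measure_eq_zero_iff_ae_notMem.1 h] with x hx h0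
  exact hx (by simpa using h0)

theorem density_linear {n : ℕ} {i k : Fin n} (hik : k ≠ i) (g : En n → ℝ) (hg : Measurable g)
    (h : ∀ q : En n, q i ≠ 0 → ∀ᵐ x : En n, g (matVec (fam i k q) x) = q i * g x) :
    ∃ c : ℝ, ∀ᵐ x : En n, g x = c * x i := by
  have hmeas : MeasurableSet {p : En n × En n | p.1 i ≠ 0 →
      g (matVec (fam i k p.1) p.2) = p.1 i * g p.2} := by
    have h1 : MeasurableSet {p : En n × En n | g (matVec (fam i k p.1) p.2) = p.1 i * g p.2} :=
      measurableSet_eq_fun (hg.comp (fam_measurable i k)) (by fun_prop)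
    have h2 : MeasurableSet {p : En n × En n | p.1 i = 0} :=
      measurableSet_eq_fun (by fun_prop) measurable_const
    convert h2.union h1 using 1
    ext p
    simp only [Set.mem_ofPred_eq, mem_union]
    tauto
  have hswap := (Measure.ae_ae_comm (μ := (volume : Measure (En n)))
    (ν := (volume : Measure (En n))) (p := fun q x => q i ≠ 0 →
      g (matVec (fam i k q) x) = q i * g x) hmeas).1 (by
      refine Filter.Eventually.of_forall fun q => ?_
      by_cases hq : q i = 0
      · simp [hq]
      · filter_upwards [h q hq] with x hx _ using hx)
  obtain ⟨x, hx, hxi⟩ := (hswap.and (ae_coord_ne i)).exists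
  refine ⟨g x / x i, ?_⟩
  have hnull : volume {q : En n | ¬ (q i ≠ 0 → g (matVec (fam i k q) x) = q i * g x)} = 0 := hx
  have himg := addHaar_image_eq_zero_of_differentiableOn_of_addHaar_eq_zero
    (volume : Measure (En n)) (f := fun q : En n => matVec (fam i k q) x)
    (s := {q : En n | ¬ (q i ≠ 0 → g (matVec (fam i k q) x) = q i * g x)}) (by
      rw [differentiableOn_euclidean]
      intro j
      by_cases hj : j = i
      · subst hj
        simp_rw [fam_apply_self]
        fun_prop
      · simp_rw [fam_apply_ne i k _ _ hj]
        unfold dvec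
        simp only [if_neg hj]
        have hne : ∀ q ∈ {q : En n | ¬ (q i ≠ 0 → g (matVec (fam i k q) x) = q i * g x)},
            q i ≠ 0 := by
          intro q hq h0
          exact hq fun h => absurd h0 h
        split_ifs
        · refine DifferentiableOn.add (by fun_prop) (DifferentiableOn.mul_const ?_ _)
          exact DifferentiableOn.inv (by fun_prop) hne
        · fun_prop) hnull
  filter_upwards [measure_eq_zero_iff_ae_notMem.1 himg, ae_coord_ne i] with y hy hyi
  set q : En n := WithLp.toLp 2 (fun j => if j = i then y i / x i else
    (y j - dvec i k (y i / x i) j * x j) / x i) with hqdef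
  have hqi : q i = y i / x i := by simp [hqdef]
  have hqi0 : q i ≠ 0 := by rw [hqi]; exact div_ne_zero hyi hxi
  have hqy : matVec (fam i k q) x = y := by
    ext j
    by_cases hj : j = i
    · subst hj
      rw [fam_apply_self, hqi]
      field_simp
    · rw [fam_apply_ne i k _ _ hj, hqi]
      have : q j = (y j - dvec i k (y i / x i) j * x j) / x i := by simp [hqdef, hj]
      rw [this]
      field_simp
      ring
  by_contra hcon
  apply hy
  refine ⟨q, ?_, hqy⟩
  intro hbad
  have := hbad hqi0
  rw [hqy, hqi] at this
  apply hcon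
  rw [this]
  ring

theorem BM.integrable_id {n : ℕ} {M : Set (En n)} (hM : BM M) :
    IntegrableOn (fun x : En n => x) M := by
  obtain ⟨R, hR⟩ := hM.2
  exact (continuous_id.continuousOn.integrableOn_compact (isCompact_closedBall (0 : En n) R)).mono_set
    fun x hx => by simpa using (hR x hx).le

theorem momentSet_apply {n : ℕ} {M : Set (En n)} (hM : BM M) (i : Fin n) :
    momentSet M i = ∫ x in M, x i := by
  have := (EuclideanSpace.proj i : En n →L[ℝ] ℝ).integral_comp_comm hM.integrable_id
  simpa [momentSet] using this.symm

theorem core {n : ℕ} (hn : 2 ≤ n) (ν : Set (En n) → En n)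
    (hsum : ∀ f : ℕ → Set (En n), (∀ i, MeasurableSet (f i)) →
      Pairwise (Function.onFun Disjoint f) → BM (⋃ i, f i) →
      HasSum (fun i => ν (f i)) (ν (⋃ i, f i)))
    (hnull : ∀ M, BM M → volume M = 0 → ν M = 0)
    (hcov : ∀ N, BM N → ∀ A : Matrix (Fin n) (Fin n) ℝ, A.det = 1 →
      ν (matVec A⁻¹ ⁻¹' N) = matVec A (ν N)) :
    ∃ c : ℝ, ∀ M, BM M → ν M = c • momentSet M := by
  obtain ⟨f, hfm, hf⟩ := exists_density ν hsum hnull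
  have hc : ∀ i, ∃ c : ℝ, ∀ᵐ x : En n, f i x = c * x i := by
    intro i
    obtain ⟨k, hk⟩ := exists_ne_fin hn i
    refine density_linear hk (f i) (hfm i) fun q hq => ?_
    filter_upwards [density_cov ν hcov f hf _ (fam_det hk hq) i] with x hx
    rw [hx, fam_row i k q (fun j => f j x)]
  choose c hc using hc
  have hcc : ∀ i j, i ≠ j → c i = c j := by
    intro i j hij
    have hA := Matrix.det_transvection_of_ne (R := ℝ) i j hij 1
    have h1 := density_cov ν hcov f hf _ hA i
    have h2 := (measurePreserving_matVec hA).quasiMeasurePreserving.ae (hc i)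
    obtain ⟨x, h1, h2, h3, h4, h5⟩ := (h1.and (h2.and ((hc i).and ((hc j).and
      (ae_coord_ne j))))).exists
    have h6 : ∑ l, Matrix.transvection i j (1 : ℝ) i l * f l x = f i x + f j x := by
      have := matVec_transvection i j (WithLp.toLp 2 (fun l => f l x))
      rw [matVec_apply] at this
      exact this
    rw [h6, h2, matVec_transvection, h3, h4] at h1
    apply mul_right_cancel₀ h5
    linarith
  have i0 : Fin n := ⟨0, by omega⟩
  refine ⟨c i0, fun M hM => ?_⟩
  ext i
  have hci : c i = c i0 := by
    by_cases h : i = i0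
    · rw [h]
    · exact hcc _ _ h
  rw [(hf M hM i).2, PiLp.smul_apply, momentSet_apply hM, smul_eq_mul, ← integral_const_mul, ← hci]
  exact integral_congr_ae (ae_restrict_of_ae (hc i))

theorem exists_moment {n : ℕ} (hn : 2 ≤ n) : ∃ (M : Set (En n)) (i : Fin n), BM M ∧ momentSet M i ≠ 0 := by
  let i : Fin n := ⟨0, by omega⟩
  have hb : BM {x : En n | ‖x‖ < 1 ∧ 0 < x i} := by
    refine ⟨?_, 1, fun x hx => hx.1⟩
    exact (measurableSet_lt measurable_norm measurable_const).inter
      (measurableSet_lt measurable_const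
        (EuclideanSpace.proj i : En n →L[ℝ] ℝ).continuous.measurable)
  refine ⟨_, i, hb, ?_⟩
  rw [momentSet_apply hb]
  apply ne_of_gt
  have hi : IntegrableOn (fun x : En n => x i) {x : En n | ‖x‖ < 1 ∧ 0 < x i} :=
    (EuclideanSpace.proj i : En n →L[ℝ] ℝ).integrable_comp hb.integrable_id
  rw [setIntegral_pos_iff_support_of_nonneg_ae
    ((ae_restrict_iff' hb.1).2 (Filter.Eventually.of_forall fun x hx => hx.2.le)) hi]
  have hopen : IsOpen {x : En n | ‖x‖ < 1 ∧ 0 < x i} :=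
    (isOpen_lt continuous_norm continuous_const).inter
      (isOpen_lt continuous_const (EuclideanSpace.proj i : En n →L[ℝ] ℝ).continuous)
  have hne : ({x : En n | ‖x‖ < 1 ∧ 0 < x i}).Nonempty := by
    refine ⟨EuclideanSpace.single i (1 / 2), ?_, ?_⟩
    · rw [EuclideanSpace.norm_single]; norm_num
    · simp
  refine lt_of_lt_of_le (hopen.measure_pos volume hne) (measure_mono fun x hx => ⟨?_, hx⟩)
  exact ne_of_gt hx.2

/-- For `n ≥ 2` and a Young function `φ`, if `Ψ : L^φ(ℝⁿ, |x|dx) → ℝⁿ`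
is a continuous, `SL(n)` covariant valuation, then there is a continuous `ξ : ℝ → ℝ` with
`ξ(0) = 0` such that `Ψ(α χ_M) = ξ(α) m(M)` for every `α ∈ ℝ`, every `R > 0` and every
measurable `M ⊆ {x : |x| < R}`. -/
theorem statement10 (n : ℕ) (hn : 2 ≤ n) (φ : ℝ → ℝ) (hφ : IsYoung φ)
    (Ψ : (En n → ℝ) → En n) (hae : RespectsAE φ Ψ)
    (hval : IsOrliczValuation φ Ψ) (hcov : IsOrliczSLCovariant φ Ψ)
    (hcont : OrliczContinuous φ Ψ) :
    ∃ ξ : ℝ → ℝ, Continuous ξ ∧ ξ 0 = 0 ∧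
      ∀ (α R : ℝ) (M : Set (En n)), 0 < R → MeasurableSet M →
        M ⊆ {x : En n | ‖x‖ < R} →
        Ψ (M.indicator fun _ => α) = ξ α • momentSet M := by
  have hnu : ∀ α : ℝ, ∃ c : ℝ, ∀ M : Set (En n), BM M →
      Ψ (M.indicator fun _ => α) = c • momentSet M := by
    intro α
    refine core hn (fun M => Ψ (M.indicator fun _ => α))
      (fun f h1 h2 h3 => nu_hasSum hn hφ hcov hval hcont α f h1 h2 h3)
      (fun M h1 h2 => nu_null hn hφ hcov hae α M h1 h2) ?_
    intro N hN A hA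
    rw [← hcov _ (mem_indicator hφ hN α) A hA]
    rfl
  choose ξ hξ using hnu
  obtain ⟨M, i, hM, hi⟩ := exists_moment hn
  have hξ' : ∀ α, ξ α = Ψ (M.indicator fun _ => α) i / momentSet M i := by
    intro α
    rw [hξ α M hM, PiLp.smul_apply, smul_eq_mul, mul_div_cancel_right₀ _ hi]
  refine ⟨ξ, ?_, ?_, fun α R N _ hN hNR => hξ α N ⟨hN, R, fun x hx => hNR hx⟩⟩
  · rw [continuous_iff_seqContinuous]
    intro a α ha
    have h1 : Tendsto (fun k => Ψ (M.indicator fun _ => a k)) atTop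
        (𝓝 (Ψ (M.indicator fun _ => α))) := by
      apply hcont _ _ (fun k => mem_indicator hφ hM _) (mem_indicator hφ hM _)
      have h2 : ∀ k, (fun x => M.indicator (fun _ => a k) x - M.indicator (fun _ => α) x) =
          M.indicator fun _ => a k - α := by
        intro k
        ext x
        by_cases hx : x ∈ M <;> simp [hx]
      simp_rw [h2]
      exact norm_tendsto_scale hφ hM (by simpa using ha.sub_const α)
    have h3 := ((EuclideanSpace.proj i : En n →L[ℝ] ℝ).continuous.tendsto _).comp h1
    have h4 := h3.div_const (momentSet M i)
    rw [hξ' α]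
    refine h4.congr fun k => ?_
    exact (hξ' (a k)).symm
  · rw [hξ' 0]
    have : M.indicator (fun _ : En n => (0 : ℝ)) = fun _ => 0 := by
      ext x; simp
    rw [this, Psi_zero hn hφ hcov]
    simp

end
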